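/- For every k ∈ ℤ≥0, the supremum over all n ∈ ℤ>0 and ξ ∈ ℍ of n^{m/2−1}·(Im ξ)^{m/2+k}·|ψ_n^{(k)}(ξ)| is finite, where ψ_n^{(k)} denotes the k-th complex derivative of ψ_n. -/

import Mathlib

open Complex MeasureTheory Filter Topology
open scoped Real

set_option autoImplicit false

noncomputable section

/-- `SL₂(ℤ)`. -/
abbrev SL2Z := Matrix.SpecialLinearGroup (Fin 2) ℤ

/-- The upper half-plane, as a subset of `ℂ`. -/
def UH : Set ℂ := {z : ℂ | 0 < z.im}

/-- The `(i,j)` entry of `γ ∈ SL₂(ℤ)`, as a complex number. -/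
def entry (γ : SL2Z) (i j : Fin 2) : ℂ :=
  ((γ : Matrix (Fin 2) (Fin 2) ℤ) i j : ℂ)

/-- The Möbius action of `SL₂(ℤ)` on the upper half-plane (as a map on `ℂ`). -/
def act (γ : SL2Z) (z : ℂ) : ℂ :=
  (entry γ 0 0 * z + entry γ 0 1) / (entry γ 1 0 * z + entry γ 1 1)

/-- The hyperbolic measure `dv(x+iy) = dx·dy/y²` on the upper half-plane. -/
def hypMeasure : Measure ℂ :=
  ((volume : Measure ℂ).withDensity fun z => ENNReal.ofReal (1 / z.im ^ 2)).restrict UH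

/-- A multiplier system on `Γ`: holomorphic square roots `η_γ` of `z ↦ c_γ z + d_γ`
satisfying the cocycle condition. -/
structure IsMultiplierSystem (Γ : Subgroup SL2Z) (η : Γ → ℂ → ℂ) : Prop where
  holo : ∀ γ : Γ, DifferentiableOn ℂ (η γ) UH
  sq : ∀ γ : Γ, ∀ z ∈ UH, η γ z ^ 2 = entry (γ : SL2Z) 1 0 * z + entry (γ : SL2Z) 1 1
  cocycle : ∀ γ₁ γ₂ : Γ, ∀ z ∈ UH,
    η (γ₁ * γ₂) z = η γ₁ (act (γ₂ : SL2Z) z) * η γ₂ z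

/-- `χ` has finite order. -/
def HasFiniteOrderChar (Γ : Subgroup SL2Z) (χ : Γ →* ℂˣ) : Prop :=
  ∃ n : ℕ, 0 < n ∧ ∀ γ : Γ, χ γ ^ n = 1

/-- `f` is a cusp form of weight `m = 5/2 + j` for `(Γ, η, χ)`; here
`η γ z ^ (-(5 + 2j))` is the integer power `η_γ(z)^{-2m}`, and the boundedness of
`‖f‖·(Im z)^{m/2}` on the upper half-plane expresses the vanishing at all cusps. -/
def IsCuspForm (Γ : Subgroup SL2Z) (η : Γ → ℂ → ℂ) (χ : Γ →* ℂˣ) (m : ℝ) (j : ℕ)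
    (f : ℂ → ℂ) : Prop :=
  DifferentiableOn ℂ f UH ∧
  (∀ γ : Γ, ∀ z ∈ UH,
    f (act (γ : SL2Z) z) * η γ z ^ (-(5 + 2 * (j : ℤ))) = (χ γ : ℂ) * f z) ∧
  ∃ C : ℝ, ∀ z ∈ UH, ‖f z‖ * z.im ^ (m / 2) ≤ C

/-- A measurable fundamental domain for the action of `Γ` on the upper half-plane,
with respect to the hyperbolic measure. -/
def IsFundDom (Γ : Subgroup SL2Z) (F : Set ℂ) : Prop :=
  MeasurableSet F ∧ F ⊆ UH ∧
  hypMeasure (UH \ ⋃ γ : Γ, act (γ : SL2Z) '' F) = 0 ∧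
  ∀ γ : Γ, γ ≠ 1 → hypMeasure (F ∩ act (γ : SL2Z) '' F) = 0

/-- The term of the classical Poincaré series `ψ_n`. -/
def psiTerm (Γ : Subgroup SL2Z) (η : Γ → ℂ → ℂ) (χ : Γ →* ℂˣ) (j : ℕ) (h : ℕ) (n : ℕ)
    (γ : Γ) (z : ℂ) : ℂ :=
  (starRingEnd ℂ) (χ γ : ℂ) *
    Complex.exp (2 * (π : ℂ) * I * (n : ℂ) * act (γ : SL2Z) z / (h : ℂ)) *
    η γ z ^ (-(5 + 2 * (j : ℤ)))

/-- The classical Poincaré series `ψ_n`, summed over a set `R` of representatives of the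
right cosets of `Γ_∞` in `Γ`. -/
def psi (Γ : Subgroup SL2Z) (η : Γ → ℂ → ℂ) (χ : Γ →* ℂˣ) (j : ℕ) (h : ℕ) (R : Set Γ)
    (n : ℕ) (z : ℂ) : ℂ :=
  ∑' δ : R, psiTerm Γ η χ j h n (δ : Γ) z


/-! ### Analytic estimates -/

/-- The basic integral. -/
def Jint (p : ℝ) : ENNReal := ∫⁻ u : ℝ, ENNReal.ofReal ((1 + u ^ 2) ^ (-p))

lemma Jint_ne_top {p : ℝ} (hp : 1 / 2 < p) : Jint p ≠ ⊤ := by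
  have h := integrable_rpow_neg_one_add_norm_sq (E := ℝ) (μ := volume) (r := 2 * p)
    (by simp; linarith)
  have h2 := h.lintegral_lt_top
  unfold Jint
  have e : ∀ u : ℝ, (1 + u ^ 2) ^ (-p) = (1 + ‖u‖ ^ 2) ^ (-(2 * p) / 2) := by
    intro u
    rw [Real.norm_eq_abs, sq_abs]
    congr 1
    ring
  simp_rw [e]
  exact h2.ne

lemma lint_scale {p K : ℝ} (hK : 0 < K) (α : ℝ) :
    ∫⁻ t : ℝ, ENNReal.ofReal ((1 + ((t + α) / K) ^ 2) ^ (-p)) = ENNReal.ofReal K * Jint p := by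
  rw [lintegral_add_right_eq_self
    (fun t : ℝ => ENNReal.ofReal ((1 + (t / K) ^ 2) ^ (-p))) α]
  unfold Jint
  have h1 := Real.map_volume_mul_left (a := K⁻¹) (inv_ne_zero hK.ne')
  have h2 : ∫⁻ t : ℝ, ENNReal.ofReal ((1 + (t / K) ^ 2) ^ (-p)) =
      ∫⁻ u, ENNReal.ofReal ((1 + u ^ 2) ^ (-p)) ∂(Measure.map (K⁻¹ * ·) volume) := by
    rw [lintegral_map (by fun_prop) (by fun_prop)]
    simp_rw [div_eq_inv_mul]
  rw [h2, h1, lintegral_smul_measure, inv_inv, abs_of_pos hK, smul_eq_mul]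

lemma sum_int {p K : ℝ} (hK : 0 < K) (α : ℝ) (S : ℤ → ENNReal)
    (hS : ∀ d : ℤ, ∀ t ∈ Set.Ico (d : ℝ) (d + 1),
      S d ≤ ENNReal.ofReal (5 ^ p) * ENNReal.ofReal ((1 + ((t + α) / K) ^ 2) ^ (-p))) :
    ∑' d, S d ≤ ENNReal.ofReal (5 ^ p) * (ENNReal.ofReal K * Jint p) := by
  rw [← lint_scale hK α, ← lintegral_const_mul _ (by fun_prop), ← setLIntegral_univ,
    ← iUnion_Ico_intCast ℝ, lintegral_iUnion (fun _ => measurableSet_Ico)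
      (Set.pairwise_disjoint_Ico_intCast ℝ)]
  refine ENNReal.tsum_le_tsum fun d => ?_
  calc S d = ∫⁻ _ in Set.Ico (d : ℝ) (d + 1), S d := by simp
    _ ≤ _ := setLIntegral_mono' measurableSet_Ico (hS d)

lemma cmp_aux {p A B : ℝ} (hp : 0 ≤ p) (hA : 0 < A) (hB : 0 < B) (h : B ≤ 5 * A) :
    ENNReal.ofReal (A ^ (-p)) ≤ ENNReal.ofReal (5 ^ p) * ENNReal.ofReal (B ^ (-p)) := by
  rw [← ENNReal.ofReal_mul (by positivity)]
  apply ENNReal.ofReal_le_ofReal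
  have h1 : B ^ p ≤ 5 ^ p * A ^ p := by
    rw [← Real.mul_rpow (by norm_num) hA.le]
    exact Real.rpow_le_rpow hB.le h hp
  rw [Real.rpow_neg hA.le, Real.rpow_neg hB.le, ← div_eq_mul_inv,
    le_div_iff₀ (by positivity), inv_mul_le_iff₀ (by positivity)]
  linarith

lemma sum_d {p K : ℝ} (hp : 0 ≤ p) (hK : 0 < K) (hK2 : 1 / 2 ≤ K ^ 2) (α : ℝ) :
    ∑' d : ℤ, ENNReal.ofReal ((1 + ((d + α) / K) ^ 2) ^ (-p)) ≤
      ENNReal.ofReal (5 ^ p) * (ENNReal.ofReal K * Jint p) := by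
  refine sum_int hK α _ fun d t ht => cmp_aux hp (by positivity) (by positivity) ?_
  rw [div_pow, div_pow]
  have h1 : (t + α) ^ 2 ≤ 2 * (d + α) ^ 2 + 2 := by
    nlinarith [sq_nonneg (t + α - 2 * (d + α)), ht.1, ht.2, sq_nonneg (t - d)]
  have hK' : 0 < K ^ 2 := by positivity
  have h2 : (t + α) ^ 2 / K ^ 2 ≤ (2 * (d + α) ^ 2 + 2) / K ^ 2 := by gcongr
  have h3 : (2 * (d + α) ^ 2 + 2) / K ^ 2 = 2 * ((d + α) ^ 2 / K ^ 2) + 2 / K ^ 2 := by ring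
  have h4 : 2 / K ^ 2 ≤ 4 := by rw [div_le_iff₀ hK']; linarith
  have h5 : 0 ≤ (d + α) ^ 2 / K ^ 2 := by positivity
  linarith

lemma sum_c {p K : ℝ} (hp : 0 ≤ p) (hK : 0 < K) :
    ∑' c : ℤ, (if c = 0 then 0 else ENNReal.ofReal ((1 + ((c : ℝ) / K) ^ 2) ^ (-p))) ≤
      ENNReal.ofReal (5 ^ p) * (ENNReal.ofReal K * Jint p) := by
  refine sum_int hK 0 _ fun c t ht => ?_
  split_ifs with hc
  · simp
  refine cmp_aux hp (by positivity) (by positivity) ?_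
  rw [div_pow, div_pow, add_zero]
  have hc2 : (1 : ℝ) ≤ (c : ℝ) ^ 2 := by
    have : (1 : ℤ) ≤ c ^ 2 := by
      have := sq_pos_of_ne_zero hc
      lia
    exact_mod_cast this
  have h1 : t ^ 2 ≤ 5 * (c : ℝ) ^ 2 := by
    nlinarith [sq_nonneg (t - 2 * c), ht.1, ht.2, sq_nonneg (t - c)]
  have h2 : t ^ 2 / K ^ 2 ≤ (5 * (c : ℝ) ^ 2) / K ^ 2 := by gcongr
  have h3 : (5 * (c : ℝ) ^ 2) / K ^ 2 = 5 * ((c : ℝ) ^ 2 / K ^ 2) := by ring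
  linarith

/-- The two-dimensional majorant. -/
def maj (N x y s : ℝ) (c d : ℤ) : ℝ :=
  N⁻¹ * (1 + ((c * x + d) ^ 2 + c ^ 2 * y ^ 2) / (N * y)) ^ (-s)

lemma maj_le {N x y s : ℝ} (hN : 1 ≤ N) (hy : 1 / 2 ≤ y) (hs : 0 ≤ s) (c d : ℤ) :
    maj N x y s c d ≤ N⁻¹ * ((1 + ((c : ℝ) / √(N / y)) ^ 2) ^ (-(s / 2)) *
      (1 + ((d + c * x) / √(N * y)) ^ 2) ^ (-(s / 2))) := by
  unfold maj
  have hN0 : 0 < N := by linarith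
  have hy0 : 0 < y := by linarith
  gcongr
  rw [div_pow, div_pow, Real.sq_sqrt (by positivity), Real.sq_sqrt (by positivity),
    ← Real.mul_rpow (by positivity) (by positivity)]
  have e : ((c * x + d) ^ 2 + c ^ 2 * y ^ 2) / (N * y) =
      (c : ℝ) ^ 2 / (N / y) + (d + c * x) ^ 2 / (N * y) := by
    field_simp
    ring
  rw [e]
  set u := (c : ℝ) ^ 2 / (N / y)
  set v := (d + c * x) ^ 2 / (N * y)
  have hu : 0 ≤ u := by positivity
  have hv : 0 ≤ v := by positivity
  have e2 : (1 + (u + v)) ^ (-s) = ((1 + (u + v)) ^ 2) ^ (-(s / 2)) := by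
    rw [← Real.rpow_natCast, ← Real.rpow_mul (by positivity)]
    congr 1
    push_cast
    ring
  rw [e2]
  apply Real.rpow_le_rpow_of_nonpos (by positivity) _ (by linarith)
  nlinarith [mul_nonneg hu hv]

lemma sum_cd {N x y s : ℝ} (hN : 1 ≤ N) (hy : 1 / 2 ≤ y) (hs : 0 ≤ s) :
    ∑' c : ℤ, ∑' d : ℤ, (if c = 0 then 0 else ENNReal.ofReal (maj N x y s c d)) ≤
      (ENNReal.ofReal (5 ^ (s / 2)) * Jint (s / 2)) ^ 2 := by
  have hN0 : 0 < N := by linarith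
  have hy0 : 0 < y := by linarith
  set p := s / 2 with hp
  have hp0 : 0 ≤ p := by positivity
  set K := √(N * y) with hK
  set L := √(N / y) with hL
  have hK0 : 0 < K := Real.sqrt_pos.2 (by positivity)
  have hL0 : 0 < L := Real.sqrt_pos.2 (by positivity)
  have hK2 : 1 / 2 ≤ K ^ 2 := by
    rw [hK, Real.sq_sqrt (by positivity)]
    nlinarith
  have hKL : K * L = N := by
    rw [hK, hL, ← Real.sqrt_mul (by positivity)]
    rw [show N * y * (N / y) = N ^ 2 by field_simp]
    exact Real.sqrt_sq hN0.le
  calc _ ≤ ∑' c : ℤ, ∑' d : ℤ, ENNReal.ofReal N⁻¹ *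
        ((if c = 0 then 0 else ENNReal.ofReal ((1 + ((c : ℝ) / L) ^ 2) ^ (-p))) *
          ENNReal.ofReal ((1 + ((d + c * x) / K) ^ 2) ^ (-p))) := by
        refine ENNReal.tsum_le_tsum fun c => ENNReal.tsum_le_tsum fun d => ?_
        split_ifs with hc
        · simp
        · rw [← ENNReal.ofReal_mul (by positivity), ← ENNReal.ofReal_mul (by positivity)]
          exact ENNReal.ofReal_le_ofReal (maj_le hN hy hs c d)
    _ = ENNReal.ofReal N⁻¹ * ∑' c : ℤ,
        ((if c = 0 then 0 else ENNReal.ofReal ((1 + ((c : ℝ) / L) ^ 2) ^ (-p))) *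
          ∑' d : ℤ, ENNReal.ofReal ((1 + ((d + c * x) / K) ^ 2) ^ (-p))) := by
        simp_rw [ENNReal.tsum_mul_left]
    _ ≤ ENNReal.ofReal N⁻¹ * ∑' c : ℤ,
        ((if c = 0 then 0 else ENNReal.ofReal ((1 + ((c : ℝ) / L) ^ 2) ^ (-p))) *
          (ENNReal.ofReal (5 ^ p) * (ENNReal.ofReal K * Jint p))) := by
        gcongr with c
        exact sum_d hp0 hK0 hK2 _
    _ ≤ ENNReal.ofReal N⁻¹ * ((ENNReal.ofReal (5 ^ p) * (ENNReal.ofReal L * Jint p)) *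
          (ENNReal.ofReal (5 ^ p) * (ENNReal.ofReal K * Jint p))) := by
        rw [ENNReal.tsum_mul_right]
        gcongr
        exact sum_c hp0 hL0
    _ = (ENNReal.ofReal N⁻¹ * (ENNReal.ofReal K * ENNReal.ofReal L)) *
          (ENNReal.ofReal (5 ^ p) * Jint p) ^ 2 := by ring
    _ = _ := by
        rw [← ENNReal.ofReal_mul hK0.le, hKL, ← ENNReal.ofReal_mul (by positivity),
          inv_mul_cancel₀ hN0.ne']
        simp

lemma maj_le_one {N x y s : ℝ} (hN : 1 ≤ N) (hy : 1 / 2 ≤ y) (hs : 0 ≤ s) (c d : ℤ) :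
    maj N x y s c d ≤ 1 := by
  unfold maj
  have hN0 : 0 < N := by linarith
  have hy0 : 0 < y := by linarith
  apply mul_le_one₀ (inv_le_one_of_one_le₀ hN) (by positivity)
  apply Real.rpow_le_one_of_one_le_of_nonpos _ (by linarith)
  have : 0 ≤ ((c * x + d) ^ 2 + c ^ 2 * y ^ 2) / (N * y) := by positivity
  linarith

lemma sum_coprime {N x y s : ℝ} (hN : 1 ≤ N) (hy : 1 / 2 ≤ y) (hs : 0 ≤ s) :
    ∑' q : ℤ × ℤ, (if IsCoprime q.1 q.2 then ENNReal.ofReal (maj N x y s q.1 q.2) else 0) ≤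
      (ENNReal.ofReal (5 ^ (s / 2)) * Jint (s / 2)) ^ 2 + 2 := by
  calc _ ≤ ∑' q : ℤ × ℤ, ((if q.1 = 0 then 0 else ENNReal.ofReal (maj N x y s q.1 q.2)) +
        ((if q = (0, 1) then 1 else 0) + (if q = (0, -1) then 1 else 0))) := by
        refine ENNReal.tsum_le_tsum fun q => ?_
        obtain ⟨c, d⟩ := q
        by_cases hcop : IsCoprime c d
        · by_cases hc : c = 0
          · subst hc
            have hm : ENNReal.ofReal (maj N x y s 0 d) ≤ 1 := by
              rw [← ENNReal.ofReal_one]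
              exact ENNReal.ofReal_le_ofReal (maj_le_one hN hy hs _ _)
            rcases Int.isUnit_iff.1 (isCoprime_zero_left.1 hcop) with rfl | rfl
            · simpa [hcop] using hm
            · simpa [hcop] using hm
          · simp [hcop, hc]
        · simp [hcop]
    _ ≤ _ := by
        rw [ENNReal.tsum_add, ENNReal.tsum_add, tsum_ite_eq, tsum_ite_eq,
          ENNReal.tsum_prod (f := fun c d : ℤ =>
            if c = 0 then 0 else ENNReal.ofReal (maj N x y s c d))]
        gcongr
        · exact sum_cd hN hy hs
        · norm_num

lemma exp_bound {a s : ℝ} (ha : 0 < a) (hs : 0 < s) :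
    ∃ C : ℝ, 0 < C ∧ ∀ x : ℝ, 0 < x → x ^ s * Real.exp (-(a * x)) ≤ C * (1 + 1 / x) ^ (-s) := by
  set b := min 1 (a / s) with hb
  have hb0 : 0 < b := lt_min one_pos (by positivity)
  have hb1 : b ≤ 1 := min_le_left _ _
  have hb2 : b * s ≤ a := by
    have : b ≤ a / s := min_le_right _ _
    rwa [le_div_iff₀ hs] at this
  refine ⟨b⁻¹ ^ s, by positivity, fun x hx => ?_⟩
  have h1 : 1 + x ≤ b⁻¹ * Real.exp (b * x) := by
    rw [← div_eq_inv_mul, le_div_iff₀ hb0]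
    nlinarith [Real.add_one_le_exp (b * x)]
  have h2 : (1 + x) ^ s ≤ b⁻¹ ^ s * Real.exp (a * x) := by
    calc (1 + x) ^ s ≤ (b⁻¹ * Real.exp (b * x)) ^ s :=
          Real.rpow_le_rpow (by positivity) h1 hs.le
      _ = b⁻¹ ^ s * Real.exp (b * x * s) := by
          rw [Real.mul_rpow (by positivity) (by positivity), ← Real.exp_mul]
      _ ≤ _ := by
          have : b * x * s ≤ a * x := by nlinarith
          gcongr
  have e : (1 + 1 / x) ^ (-s) = x ^ s / (1 + x) ^ s := by
    rw [show 1 + 1 / x = (1 + x) / x by field_simp; ring, Real.rpow_neg (by positivity),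
      Real.div_rpow (by positivity) hx.le, inv_div]
  rw [e, Real.exp_neg, ← mul_div_assoc, le_div_iff₀ (by positivity), ← div_eq_mul_inv,
    div_mul_eq_mul_div, div_le_iff₀ (by positivity)]
  have : 0 < x ^ s := by positivity
  nlinarith

/-! ### The Poincaré series -/

lemma act_eq_smul (γ : SL2Z) {z : ℂ} (hz : z ∈ UH) :
    act γ z = ((γ • (⟨z, hz⟩ : UpperHalfPlane) : UpperHalfPlane) : ℂ) := by
  rw [UpperHalfPlane.coe_specialLinearGroup_apply]
  simp [act, entry]

lemma smul_im (γ : SL2Z) (w : UpperHalfPlane) :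
    (γ • w).im = w.im / (((γ 1 0 : ℤ) * w.re + (γ 1 1 : ℤ)) ^ 2 + (γ 1 0 : ℤ) ^ 2 * w.im ^ 2) := by
  rw [ModularGroup.im_smul_eq_div_normSq, ModularGroup.denom_apply, Complex.normSq_apply]
  congr 1
  simp
  ring

lemma norm_den_sq (γ : SL2Z) {z : ℂ} (hz : z ∈ UH) :
    (γ • (⟨z, hz⟩ : UpperHalfPlane)).im = z.im / ‖entry γ 1 0 * z + entry γ 1 1‖ ^ 2 := by
  rw [ModularGroup.im_smul_eq_div_normSq, ModularGroup.denom_apply, Complex.normSq_eq_norm_sq]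
  simp [entry]
  rfl

lemma den_ne_zero (γ : SL2Z) {z : ℂ} (hz : z ∈ UH) : entry γ 1 0 * z + entry γ 1 1 ≠ 0 := by
  intro h0
  have h1 := norm_den_sq γ hz
  rw [h0] at h1
  simp at h1
  exact (UpperHalfPlane.im_ne_zero _) h1

lemma chi_norm {Γ : Subgroup SL2Z} {χ : Γ →* ℂˣ} (hχ : HasFiniteOrderChar Γ χ) (γ : Γ) :
    ‖(χ γ : ℂ)‖ = 1 := by
  obtain ⟨n, hn, h⟩ := hχ
  have h1 : (χ γ : ℂ) ^ n = 1 := by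
    have := congrArg (fun u : ℂˣ => (u : ℂ)) (h γ)
    simpa using this
  exact Complex.norm_eq_one_of_pow_eq_one h1 hn.ne'

lemma eta_norm {Γ : Subgroup SL2Z} {η : Γ → ℂ → ℂ} (hη : IsMultiplierSystem Γ η)
    {m : ℝ} {j : ℕ} (hm : m = 5 / 2 + j) (γ : Γ) {z : ℂ} (hz : z ∈ UH) :
    ‖η γ z ^ (-(5 + 2 * (j : ℤ)))‖ =
      ‖entry (γ : SL2Z) 1 0 * z + entry (γ : SL2Z) 1 1‖ ^ (-m) := by
  rw [← hη.sq γ z hz, norm_zpow, norm_pow, ← Real.rpow_natCast, ← Real.rpow_mul (norm_nonneg _),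
    ← Real.rpow_intCast]
  congr 1
  rw [hm]
  push_cast
  ring

lemma term_norm {Γ : Subgroup SL2Z} {η : Γ → ℂ → ℂ} (hη : IsMultiplierSystem Γ η)
    {χ : Γ →* ℂˣ} (hχ : HasFiniteOrderChar Γ χ)
    {m : ℝ} {j : ℕ} (hm : m = 5 / 2 + j) (h n : ℕ) (γ : Γ) {z : ℂ} (hz : z ∈ UH) :
    ‖psiTerm Γ η χ j h n γ z‖ =
      Real.exp (-(2 * π / h * (n * ((γ : SL2Z) • (⟨z, hz⟩ : UpperHalfPlane)).im))) *
      ‖entry (γ : SL2Z) 1 0 * z + entry (γ : SL2Z) 1 1‖ ^ (-m) := by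
  unfold psiTerm
  rw [norm_mul, norm_mul, eta_norm hη hm γ hz, RCLike.norm_conj, chi_norm hχ, one_mul,
    Complex.norm_exp, act_eq_smul _ hz]
  congr 2
  have e : ∀ w : ℂ, 2 * (π : ℂ) * I * (n : ℂ) * w / (h : ℂ) =
      ((2 * π * n / h : ℝ) : ℂ) * (I * w) := by
    intro w
    push_cast
    ring
  rw [e, Complex.re_ofReal_mul]
  simp
  ring

/-- Injectivity of the bottom row on representatives. -/
lemma row_inj {Γ : Subgroup SL2Z} {R : Set Γ}
    (hR : ∀ γ : Γ, ∃! δ : Γ, δ ∈ R ∧ ∃ τ : Γ, entry (τ : SL2Z) 1 0 = 0 ∧ γ = τ * δ)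
    (σ : SL2Z) :
    Function.Injective (fun δ : R => ((((δ : Γ) : SL2Z) * σ) 1 0, (((δ : Γ) : SL2Z) * σ) 1 1)) := by
  intro δ₁ δ₂ he
  simp only [Prod.mk.injEq] at he
  obtain ⟨h0, h1⟩ := he
  set A : SL2Z := ((δ₁ : Γ) : SL2Z) * σ with hA
  set B : SL2Z := ((δ₂ : Γ) : SL2Z) * σ with hB
  have hτ : entry (((δ₁ : Γ) * (δ₂ : Γ)⁻¹ : Γ) : SL2Z) 1 0 = 0 := by
    have e : (((δ₁ : Γ) * (δ₂ : Γ)⁻¹ : Γ) : SL2Z) = A * B⁻¹ := by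
      rw [hA, hB]
      simp
    rw [e]
    have : (A * B⁻¹) 1 0 = 0 := by
      simp [Matrix.mul_apply, Fin.sum_univ_two, Matrix.SpecialLinearGroup.coe_inv,
        Matrix.adjugate_fin_two, h0, h1]
      ring
    unfold entry
    exact_mod_cast this
  have h1 := (hR δ₁).unique ⟨δ₁.2, 1, by simp [entry], by simp⟩
    (y₂ := (δ₂ : Γ)) ⟨δ₂.2, (δ₁ : Γ) * (δ₂ : Γ)⁻¹, hτ, by simp⟩
  exact Subtype.ext h1

lemma term_bound {Γ : Subgroup SL2Z} {η : Γ → ℂ → ℂ} (hη : IsMultiplierSystem Γ η)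
    {χ : Γ →* ℂˣ} (hχ : HasFiniteOrderChar Γ χ)
    {m : ℝ} {j : ℕ} (hm : m = 5 / 2 + j) {h : ℕ} {C : ℝ}
    (hC : ∀ x : ℝ, 0 < x →
      x ^ (m / 2) * Real.exp (-(2 * π / h * x)) ≤ C * (1 + 1 / x) ^ (-(m / 2)))
    (n : ℕ) (γ : Γ) {z : ℂ} (hz : z ∈ UH) (σ : SL2Z) :
    ((n : ℝ) + 1) ^ (m / 2 - 1) * z.im ^ (m / 2) * ‖psiTerm Γ η χ j h (n + 1) γ z‖ ≤
      C * maj (n + 1) (σ • (⟨z, hz⟩ : UpperHalfPlane)).re (σ • (⟨z, hz⟩ : UpperHalfPlane)).im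
        (m / 2) (((γ : SL2Z) * σ⁻¹) 1 0) (((γ : SL2Z) * σ⁻¹) 1 1) := by
  rw [term_norm hη hχ hm h (n + 1) γ hz]
  set N : ℝ := (n : ℝ) + 1 with hN
  have hN0 : 0 < N := by positivity
  have hNc : ((n + 1 : ℕ) : ℝ) = N := by push_cast; rfl
  rw [hNc]
  set τ : UpperHalfPlane := ⟨z, hz⟩ with hτ
  set w := σ • τ with hw
  set t := ((γ : SL2Z) • τ).im with ht
  have ht0 : 0 < t := UpperHalfPlane.im_pos _
  have hz0 : 0 < z.im := hz
  have ht1 : t = z.im / ‖entry (γ : SL2Z) 1 0 * z + entry (γ : SL2Z) 1 1‖ ^ 2 :=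
    norm_den_sq _ hz
  have ht2 : t = w.im / (((((γ : SL2Z) * σ⁻¹) 1 0 : ℤ) * w.re + (((γ : SL2Z) * σ⁻¹) 1 1 : ℤ)) ^ 2
      + (((γ : SL2Z) * σ⁻¹) 1 0 : ℤ) ^ 2 * w.im ^ 2) := by
    rw [← smul_im, hw, smul_smul]
    simp [ht]
  set r := ‖entry (γ : SL2Z) 1 0 * z + entry (γ : SL2Z) 1 1‖ with hr
  have hr0 : 0 < r := norm_pos_iff.2 (den_ne_zero _ hz)
  have e1 : z.im ^ (m / 2) * r ^ (-m) = t ^ (m / 2) := by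
    rw [ht1, Real.div_rpow hz0.le (by positivity), ← Real.rpow_natCast, ← Real.rpow_mul hr0.le,
      Real.rpow_neg hr0.le, div_eq_mul_inv]
    congr 3
    push_cast
    ring
  have e2 : N ^ (m / 2 - 1) = N⁻¹ * N ^ (m / 2) := by
    rw [Real.rpow_sub_one hN0.ne', div_eq_inv_mul]
  calc N ^ (m / 2 - 1) * z.im ^ (m / 2) * (Real.exp (-(2 * π / h * (N * t))) * r ^ (-m))
      = N⁻¹ * ((N * t) ^ (m / 2) * Real.exp (-(2 * π / h * (N * t)))) := by
        rw [Real.mul_rpow hN0.le ht0.le, ← e1, e2]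
        ring
    _ ≤ N⁻¹ * (C * (1 + 1 / (N * t)) ^ (-(m / 2))) := by
        exact mul_le_mul_of_nonneg_left (hC _ (mul_pos hN0 ht0)) (by positivity)
    _ = _ := by
        unfold maj
        have e3 : 1 / (N * t) = ((((((γ : SL2Z) * σ⁻¹) 1 0 : ℤ) * w.re +
            (((γ : SL2Z) * σ⁻¹) 1 1 : ℤ)) ^ 2
            + (((γ : SL2Z) * σ⁻¹) 1 0 : ℤ) ^ 2 * w.im ^ 2)) / (N * w.im) := by
          rw [ht2, mul_div_assoc', one_div_div]
        rw [e3]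
        ring

lemma psi_bound {Γ : Subgroup SL2Z} {η : Γ → ℂ → ℂ} (hη : IsMultiplierSystem Γ η)
    {χ : Γ →* ℂˣ} (hχ : HasFiniteOrderChar Γ χ)
    {m : ℝ} {j : ℕ} (hm : m = 5 / 2 + j) {h : ℕ} (hh : 0 < h) {R : Set Γ}
    (hR : ∀ γ : Γ, ∃! δ : Γ, δ ∈ R ∧ ∃ τ : Γ, entry (τ : SL2Z) 1 0 = 0 ∧ γ = τ * δ) :
    ∃ C : ℝ, ∀ n : ℕ, ∀ z ∈ UH,
      ((n : ℝ) + 1) ^ (m / 2 - 1) * z.im ^ (m / 2) * ‖psi Γ η χ j h R (n + 1) z‖ ≤ C := by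
  have hj : (0 : ℝ) ≤ j := by positivity
  have hm2 : 0 < m / 2 := by linarith
  have hh' : (0 : ℝ) < h := by exact_mod_cast hh
  obtain ⟨C, hC0, hC⟩ := exp_bound (a := 2 * π / h) (s := m / 2) (by positivity) hm2
  set B : ENNReal := (ENNReal.ofReal (5 ^ (m / 2 / 2)) * Jint (m / 2 / 2)) ^ 2 + 2 with hB
  have hBt : ENNReal.ofReal C * B ≠ ⊤ := by
    have hJ : Jint (m / 2 / 2) ≠ ⊤ := Jint_ne_top (by linarith)
    apply ENNReal.mul_ne_top ENNReal.ofReal_ne_top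
    rw [hB]
    exact ENNReal.add_ne_top.2
      ⟨ENNReal.pow_ne_top (ENNReal.mul_ne_top ENNReal.ofReal_ne_top hJ), by simp⟩
  refine ⟨(ENNReal.ofReal C * B).toReal, fun n z hz => ?_⟩
  obtain ⟨σ, hσ, -⟩ := ModularGroup.exists_one_half_le_im_smul_and_norm_denom_le
    (⟨z, hz⟩ : UpperHalfPlane)
  set w := σ • (⟨z, hz⟩ : UpperHalfPlane) with hw
  have hz0 : 0 < z.im := hz
  set A : ℝ := ((n : ℝ) + 1) ^ (m / 2 - 1) * z.im ^ (m / 2) with hA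
  have hA0 : 0 ≤ A := by positivity
  have key : ENNReal.ofReal A * ‖psi Γ η χ j h R (n + 1) z‖ₑ ≤ ENNReal.ofReal C * B := by
    let F : ℤ × ℤ → ENNReal := fun q =>
      if IsCoprime q.1 q.2 then ENNReal.ofReal (maj (n + 1) w.re w.im (m / 2) q.1 q.2) else 0
    calc ENNReal.ofReal A * ‖psi Γ η χ j h R (n + 1) z‖ₑ
        ≤ ENNReal.ofReal A * ∑' δ : R, ‖psiTerm Γ η χ j h (n + 1) (δ : Γ) z‖ₑ := by
          gcongr
          exact enorm_tsum_le_tsum_enorm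
      _ = ∑' δ : R, ENNReal.ofReal A * ‖psiTerm Γ η χ j h (n + 1) (δ : Γ) z‖ₑ := by
          rw [ENNReal.tsum_mul_left]
      _ ≤ ∑' δ : R, ENNReal.ofReal C *
            F ((((δ : Γ) : SL2Z) * σ⁻¹) 1 0, (((δ : Γ) : SL2Z) * σ⁻¹) 1 1) := by
          refine ENNReal.tsum_le_tsum fun δ => ?_
          have hcop : IsCoprime ((((δ : Γ) : SL2Z) * σ⁻¹) 1 0) ((((δ : Γ) : SL2Z) * σ⁻¹) 1 1) :=
            ModularGroup.bottom_row_coprime _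
          simp only [F]
          rw [if_pos hcop, ← ofReal_norm, ← ENNReal.ofReal_mul hA0,
            ← ENNReal.ofReal_mul hC0.le]
          exact ENNReal.ofReal_le_ofReal (term_bound hη hχ hm hC n δ hz σ)
      _ = ENNReal.ofReal C * ∑' δ : R,
            F ((((δ : Γ) : SL2Z) * σ⁻¹) 1 0, (((δ : Γ) : SL2Z) * σ⁻¹) 1 1) := by
          rw [ENNReal.tsum_mul_left]
      _ ≤ ENNReal.ofReal C * ∑' q, F q := by
          gcongr
          exact ENNReal.tsum_comp_le_tsum_of_injective (row_inj hR σ⁻¹) F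
      _ ≤ ENNReal.ofReal C * B := by
          gcongr
          exact sum_coprime (by simp) hσ hm2.le
  rw [← ofReal_norm, ← ENNReal.ofReal_mul hA0] at key
  exact (ENNReal.ofReal_le_iff_le_toReal hBt).1 key

lemma isOpen_UH : IsOpen UH := isOpen_lt continuous_const Complex.continuous_im

lemma psiTerm_diff {Γ : Subgroup SL2Z} {η : Γ → ℂ → ℂ} (hη : IsMultiplierSystem Γ η)
    (χ : Γ →* ℂˣ) (j h n : ℕ) (γ : Γ) :
    DifferentiableOn ℂ (psiTerm Γ η χ j h n γ) UH := by
  intro z hz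
  have hd := den_ne_zero (γ : SL2Z) hz
  have hη0 : η γ z ≠ 0 := by
    intro h0
    have := hη.sq γ z hz
    rw [h0] at this
    exact hd (by rw [← this]; simp)
  have h1 := hη.holo γ z hz
  have h2 : DifferentiableWithinAt ℂ (act (γ : SL2Z)) UH z := by
    unfold act
    fun_prop (disch := assumption)
  unfold psiTerm
  refine DifferentiableWithinAt.mul (by fun_prop) ?_
  exact DifferentiableWithinAt.zpow h1 (Or.inl hη0)

lemma psi_diff {Γ : Subgroup SL2Z} {η : Γ → ℂ → ℂ} (hη : IsMultiplierSystem Γ η)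
    {χ : Γ →* ℂˣ} (hχ : HasFiniteOrderChar Γ χ)
    {m : ℝ} {j : ℕ} (hm : m = 5 / 2 + j) {h : ℕ} {R : Set Γ}
    (hR : ∀ γ : Γ, ∃! δ : Γ, δ ∈ R ∧ ∃ τ : Γ, entry (τ : SL2Z) 1 0 = 0 ∧ γ = τ * δ) (n : ℕ) :
    DifferentiableOn ℂ (psi Γ η χ j h R n) UH := by
  intro z hz
  have hz0 : 0 < z.im := hz
  have hj : (0 : ℝ) ≤ j := by positivity
  have hm0 : 2 < m := by linarith
  set U : Set ℂ := {x | |x.re| < |z.re| + 1} ∩ {x | z.im / 2 < x.im} with hU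
  have hUo : IsOpen U := by
    apply IsOpen.inter
    · exact isOpen_lt (by fun_prop) (by fun_prop)
    · exact isOpen_lt (by fun_prop) (by fun_prop)
  have hzU : z ∈ U := ⟨by simp, by simp; linarith⟩
  have hUU : U ⊆ UH := fun x hx => by
    have : z.im / 2 < x.im := hx.2
    show 0 < x.im
    linarith
  have hB : 0 < z.im / 2 := by linarith
  let row : R → (Fin 2 → ℤ) := fun δ => ![((δ : Γ) : SL2Z) 1 0, ((δ : Γ) : SL2Z) 1 1]
  have hrow : Function.Injective row := by
    intro δ₁ δ₂ he
    apply row_inj hR 1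
    have h0 := congrFun he 0
    have h1 := congrFun he 1
    simp [row] at h0 h1
    simp [h0, h1]
  have hsum := (((EisensteinSeries.summable_one_div_norm_rpow hm0).comp_injective hrow).mul_left
    (EisensteinSeries.r ⟨⟨|z.re| + 1, z.im / 2⟩, hB⟩ ^ (-m)))
  have := differentiableOn_tsum_of_summable_norm hsum (U := U)
    (F := fun (δ : R) w => psiTerm Γ η χ j h n (δ : Γ) w)
    (fun δ => (psiTerm_diff hη χ j h n δ).mono hUU) hUo ?_
  · exact ((this z hzU).differentiableAt (hUo.mem_nhds hzU)).differentiableWithinAt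
  · intro δ w hw
    have hwU := hUU hw
    rw [term_norm hη hχ hm h n δ hwU]
    have hb := EisensteinSeries.summand_bound_of_mem_verticalStrip (z := (⟨w, hwU⟩ : UpperHalfPlane))
      (k := m) (by linarith) (row δ) (A := |z.re| + 1) hB ⟨hw.1.le, hw.2.le⟩
    refine le_trans ?_ hb
    have he : Real.exp (-(2 * π / h * (n * (((δ : Γ) : SL2Z) •
        (⟨w, hwU⟩ : UpperHalfPlane)).im))) ≤ 1 := by
      rw [Real.exp_le_one_iff]
      have := UpperHalfPlane.im_pos (((δ : Γ) : SL2Z) • (⟨w, hwU⟩ : UpperHalfPlane))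
      have : 0 ≤ 2 * π / h * (n * (((δ : Γ) : SL2Z) • (⟨w, hwU⟩ : UpperHalfPlane)).im) := by
        positivity
      linarith
    refine (mul_le_of_le_one_left (by positivity) he).trans (le_of_eq ?_)
    simp [row, entry]

theorem stmt18 (Γ : Subgroup SL2Z) (hΓ : Γ.FiniteIndex)
    (hI : ∀ γ : Γ, ((γ : SL2Z) : Matrix (Fin 2) (Fin 2) ℤ) ≠ -1)
    (η : Γ → ℂ → ℂ) (hη : IsMultiplierSystem Γ η)
    (χ : Γ →* ℂˣ) (hχ : HasFiniteOrderChar Γ χ)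
    (m : ℝ) (j : ℕ) (hm : m = 5 / 2 + j)
    (h : ℕ) (hh : 0 < h)
    (hT : ∃ γ : Γ, ((γ : SL2Z) : Matrix (Fin 2) (Fin 2) ℤ) = !![1, (h : ℤ); 0, 1])
    (hGammaInf : ∀ γ : Γ, entry (γ : SL2Z) 1 0 = 0 ↔
      ∃ n : ℤ, ((γ : SL2Z) : Matrix (Fin 2) (Fin 2) ℤ) = !![1, n * (h : ℤ); 0, 1])
    (hηInf : ∀ γ : Γ, entry (γ : SL2Z) 1 0 = 0 → ∀ z ∈ UH,
      η γ z ^ (-(5 + 2 * (j : ℤ))) = (χ γ : ℂ))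
    (R : Set Γ)
    (hR : ∀ γ : Γ, ∃! δ : Γ, δ ∈ R ∧ ∃ τ : Γ, entry (τ : SL2Z) 1 0 = 0 ∧ γ = τ * δ) (k : ℕ) :
    ∃ C : ℝ, ∀ n : ℕ, ∀ ξ ∈ UH,
      ((n : ℝ) + 1) ^ (m / 2 - 1) * ξ.im ^ (m / 2 + (k : ℝ)) *
        ‖iteratedDeriv k (psi Γ η χ j h R (n + 1)) ξ‖ ≤ C := by
  obtain ⟨C, hC⟩ := psi_bound hη hχ hm hh hR
  refine ⟨k.factorial * 2 ^ k * 2 ^ (m / 2) * C, fun n ξ hξ => ?_⟩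
  have hy : 0 < ξ.im := hξ
  have hm0 : 0 ≤ m / 2 := by rw [hm]; positivity
  set N : ℝ := (n : ℝ) + 1 with hN
  have hN0 : 0 < N := by positivity
  set P : ℝ := N ^ (m / 2 - 1) with hP
  have hP0 : 0 < P := by positivity
  have hball : ∀ z ∈ Metric.closedBall ξ (ξ.im / 2), ξ.im / 2 ≤ z.im := by
    intro z hz
    rw [mem_closedBall_iff_norm] at hz
    have h1 := (Complex.abs_im_le_norm (z - ξ)).trans hz
    rw [Complex.sub_im, abs_le] at h1
    linarith [h1.1]
  have hbU : Metric.closedBall ξ (ξ.im / 2) ⊆ UH := fun z hz => by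
    have := hball z hz
    show 0 < z.im
    linarith
  have hd : DiffContOnCl ℂ (psi Γ η χ j h R (n + 1)) (Metric.ball ξ (ξ.im / 2)) := by
    apply DifferentiableOn.diffContOnCl
    exact (psi_diff hη hχ hm hR (n + 1)).mono (Metric.closure_ball_subset_closedBall.trans hbU)
  have hcau := Complex.norm_iteratedDeriv_le_of_forall_mem_sphere_norm_le k
    (C := C / (P * (ξ.im / 2) ^ (m / 2))) (half_pos hy) hd (by
      intro z hz
      have hz' := Metric.sphere_subset_closedBall hz
      have h1 := hC n z (hbU hz')
      have h2 := hball z hz'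
      rw [le_div_iff₀ (by positivity), mul_comm]
      refine le_trans ?_ h1
      gcongr)
  have e1 : (ξ.im / 2) ^ (m / 2) = ξ.im ^ (m / 2) / 2 ^ (m / 2) :=
    Real.div_rpow hy.le (by norm_num) _
  have e2 : ξ.im ^ (m / 2 + (k : ℝ)) = ξ.im ^ (m / 2) * ξ.im ^ k := by
    rw [Real.rpow_add hy, Real.rpow_natCast]
  rw [e1] at hcau
  rw [e2]
  have hY : 0 < ξ.im ^ (m / 2) := by positivity
  refine (mul_le_mul_of_nonneg_left hcau (by positivity)).trans (le_of_eq ?_)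
  rw [div_pow]
  field_simp
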